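/- arXiv:1911.10944 — 2 statements merged into one kernel-verified Lean document; each statement's English description precedes it below -/
import Mathlib

section
/- For every w > 0 and every real y with -1 ≤ y < 1: ∑_{l=0}^∞ (2l+1)·P_l(y)/(l(l+1)+w) = 1/w - ∑_{l=1}^∞ [(2l+1)/(l(l+1)) - (2l+1)/(l(l+1)+w)]·P_l(y) - log((e/2)·(1-y)), where both series converge. Equivalently, the Green's function G of the screened Poisson equation on the sphere satisfies the exact split representation G = -(1/4πw) - (1/4π)·∑_{l=1}^∞ [(2l+1)/(l(l+1)+w) - (2l+1)/(l(l+1))]·P_l(y) + (1/4π)·log((e/2)(1-y)). -/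
open Filter Topology

/-- The Legendre polynomials `P l` on `ℝ`, i.e. the orthogonal polynomials on `[-1,1]`
normalized by `P l 1 = 1`, defined via the Bonnet recurrence
`P 0 y = 1`, `P 1 y = y`, `(n+2) • P (n+2) y = (2n+3) y P (n+1) y - (n+1) P n y`. -/
noncomputable def legendreP : ℕ → ℝ → ℝ
  | 0, _ => 1
  | 1, y => y
  | (n + 2), y =>
      ((2 * (n : ℝ) + 3) * y * legendreP (n + 1) y - ((n : ℝ) + 1) * legendreP n y) / ((n : ℝ) + 2)

/-- The derivative of `legendreP n`. -/
noncomputable def dLegendreP : ℕ → ℝ → ℝ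
  | 0, _ => 0
  | (n + 1), y => y * dLegendreP n y + ((n : ℝ) + 1) * legendreP n y

lemma legendreP_rec (n : ℕ) (y : ℝ) :
    ((n : ℝ) + 2) * legendreP (n + 2) y =
      (2 * (n : ℝ) + 3) * y * legendreP (n + 1) y - ((n : ℝ) + 1) * legendreP n y := by
  have h : (n : ℝ) + 2 ≠ 0 := by positivity
  rw [legendreP]
  field_simp

lemma dLegendreP_succ (n : ℕ) (y : ℝ) :
    dLegendreP (n + 1) y = y * dLegendreP n y + ((n : ℝ) + 1) * legendreP n y := by
  rw [dLegendreP]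

lemma dLegendreP_back (n : ℕ) (y : ℝ) :
    dLegendreP n y = y * dLegendreP (n + 1) y - ((n : ℝ) + 1) * legendreP (n + 1) y := by
  induction n with
  | zero => simp [dLegendreP, legendreP]
  | succ n ih =>
    have h1 := dLegendreP_succ n y
    have h2 := dLegendreP_succ (n + 1) y
    have h3 := legendreP_rec n y
    push_cast at h2 ⊢
    rw [show n + 1 + 1 = n + 2 from rfl] at *
    linear_combination h1 - y * h2 + h3 + y * ih

lemma legendreP_hasDerivAt (n : ℕ) (y : ℝ) :
    HasDerivAt (legendreP n) (dLegendreP n y) y := by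
  induction n using Nat.twoStepInduction with
  | zero =>
    have : legendreP 0 = fun _ => 1 := by funext x; simp [legendreP]
    rw [this]; simpa [dLegendreP] using hasDerivAt_const y (1 : ℝ)
  | one =>
    have : legendreP 1 = fun x => x := by funext x; simp [legendreP]
    rw [this]; simpa [dLegendreP, legendreP] using hasDerivAt_id' y
  | more n h0 h1 =>
    have : legendreP (n + 2) = fun y => ((2 * (n : ℝ) + 3) * y * legendreP (n + 1) y
        - ((n : ℝ) + 1) * legendreP n y) / ((n : ℝ) + 2) := by
      funext x; rw [legendreP]
    rw [this]
    have hd := (((((hasDerivAt_id y).const_mul (2 * (n : ℝ) + 3)).mul h1).sub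
      (h0.const_mul ((n : ℝ) + 1))).div_const ((n : ℝ) + 2))
    refine hd.congr_deriv ?_
    have h : (n : ℝ) + 2 ≠ 0 := by positivity
    have hA := dLegendreP_succ (n + 1) y
    have hB := dLegendreP_back n y
    push_cast at hA
    rw [show n + 1 + 1 = n + 2 from rfl] at hA
    rw [div_eq_iff h, hA]
    simp only [id]
    linear_combination (-((n : ℝ) + 1)) * hB

lemma legendreP_one (n : ℕ) : legendreP n 1 = 1 := by
  induction n using Nat.twoStepInduction with
  | zero => simp [legendreP]
  | one => simp [legendreP]
  | more n h0 h1 =>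
    have h : (n : ℝ) + 2 ≠ 0 := by positivity
    rw [legendreP, h0, h1, div_eq_iff h]; ring

lemma legendreP_neg (n : ℕ) (y : ℝ) : legendreP n (-y) = (-1) ^ n * legendreP n y := by
  induction n using Nat.twoStepInduction with
  | zero => simp [legendreP]
  | one => simp [legendreP]
  | more n h0 h1 =>
    have h : (n : ℝ) + 2 ≠ 0 := by positivity
    rw [legendreP, legendreP, h0, h1, div_eq_iff h]; field_simp; ring

lemma dLegendreP_I1 (n : ℕ) (y : ℝ) : (1 - y ^ 2) * dLegendreP (n + 1) y =
    ((n : ℝ) + 1) * (legendreP n y - y * legendreP (n + 1) y) := by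
  linear_combination dLegendreP_succ n y + y * dLegendreP_back n y

lemma dLegendreP_diff (n : ℕ) (y : ℝ) : dLegendreP (n + 2) y - dLegendreP n y =
    (2 * (n : ℝ) + 3) * legendreP (n + 1) y := by
  have h := dLegendreP_succ (n + 1) y
  push_cast at h
  linear_combination h - dLegendreP_back n y

lemma dLegendreP_I3 (n : ℕ) (y : ℝ) :
    (2 * ((n : ℝ) + 1) + 1) / (((n : ℝ) + 1) * (((n : ℝ) + 1) + 1)) *
      ((1 - y ^ 2) * dLegendreP (n + 1) y) = legendreP n y - legendreP (n + 2) y := by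
  rw [dLegendreP_I1]
  have h := legendreP_rec n y
  have h2 : (n : ℝ) + 1 + 1 ≠ 0 := by positivity
  have h1 : (n : ℝ) + 1 ≠ 0 := by positivity
  field_simp
  linear_combination h

lemma dLegendreP_differentiable (n : ℕ) : Differentiable ℝ (dLegendreP n) := by
  induction n with
  | zero =>
    have : dLegendreP 0 = fun _ => 0 := by funext x; simp [dLegendreP]
    rw [this]; fun_prop
  | succ n ih =>
    have : dLegendreP (n + 1) = fun y => y * dLegendreP n y + ((n : ℝ) + 1) * legendreP n y := by
      funext x; rw [dLegendreP]
    have h2 : Differentiable ℝ (legendreP n) := fun x => (legendreP_hasDerivAt n x).differentiableAt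
    rw [this]; fun_prop

lemma legendreP_continuous (n : ℕ) : Continuous (legendreP n) :=
  continuous_iff_continuousAt.2 fun x => (legendreP_hasDerivAt n x).continuousAt

lemma legendreP_sq_le (n : ℕ) (y : ℝ) (h0 : 0 ≤ y) (h1 : y ≤ 1) : legendreP n y ^ 2 ≤ 1 := by
  cases n with
  | zero => simp [legendreP]
  | succ n =>
    set c : ℝ := ((n : ℝ) + 1) * ((n : ℝ) + 2) with hc
    have hcpos : 0 < c := by positivity
    set f : ℝ → ℝ := fun x => c * legendreP (n + 1) x ^ 2 + (1 - x ^ 2) * dLegendreP (n + 1) x ^ 2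
      with hf
    have hder : ∀ x, HasDerivAt f (2 * x * dLegendreP (n + 1) x ^ 2) x := by
      intro x
      have hP := legendreP_hasDerivAt (n + 1) x
      have hP0 := legendreP_hasDerivAt n x
      have hd := (dLegendreP_differentiable (n + 1) x).hasDerivAt
      have hq : HasDerivAt (fun x : ℝ => 1 - x ^ 2) (-(2 * x)) x := by
        simpa using ((hasDerivAt_id x).pow 2).const_sub 1
      have e1 := hq.mul hd
      have e2 := (hP0.sub ((hasDerivAt_id x).mul hP)).const_mul ((n : ℝ) + 1)
      have e3 : (fun x : ℝ => (1 - x ^ 2)) * (dLegendreP (n + 1)) =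
          (fun x => ((n : ℝ) + 1) * ((legendreP n - id * legendreP (n + 1) : ℝ → ℝ) x)) := by
        funext x; simpa using dLegendreP_I1 n x
      rw [e3] at e1
      have e4 := e1.unique e2
      have hB := dLegendreP_back n x
      refine (((hP.pow 2).const_mul c).add (hq.mul (hd.pow 2))).congr_deriv ?_
      simp only [id] at e4
      simp
      linear_combination 2 * dLegendreP (n + 1) x * e4 + 2 * dLegendreP (n + 1) x * ((n : ℝ) + 1) * hB +
        (2 * dLegendreP (n + 1) x * legendreP (n + 1) x) * hc
    have hmono : MonotoneOn f (Set.Icc 0 1) := by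
      apply monotoneOn_of_deriv_nonneg (convex_Icc 0 1)
      · exact fun x _ => (hder x).continuousAt.continuousWithinAt
      · exact fun x _ => (hder x).differentiableAt.differentiableWithinAt
      · intro x hx
        rw [interior_Icc] at hx
        rw [(hder x).deriv]
        have := hx.1
        positivity
    have h := hmono ⟨h0, h1⟩ ⟨zero_le_one, le_refl _⟩ h1
    simp only [hf, legendreP_one] at h
    have h2 : 0 ≤ (1 - y ^ 2) * dLegendreP (n + 1) y ^ 2 := by
      apply mul_nonneg _ (sq_nonneg _)
      nlinarith
    have h3 : c * legendreP (n + 1) y ^ 2 ≤ c * 1 := by nlinarith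
    exact le_of_mul_le_mul_left h3 hcpos

lemma legendreP_abs_le (n : ℕ) (y : ℝ) (h0 : -1 ≤ y) (h1 : y ≤ 1) : |legendreP n y| ≤ 1 := by
  rw [← sq_le_one_iff_abs_le_one]
  rcases le_total 0 y with h | h
  · exact legendreP_sq_le n y h h1
  · have := legendreP_sq_le n (-y) (by linarith) (by linarith)
    rw [legendreP_neg, mul_pow, ← pow_mul, mul_comm n 2, pow_mul] at this
    simpa using this

/-- Partial sums of the unscreened series. -/
noncomputable def partS (N : ℕ) (y : ℝ) : ℝ :=
  ∑ l ∈ Finset.range N,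
    (2 * ((l : ℝ) + 1) + 1) / (((l : ℝ) + 1) * (((l : ℝ) + 1) + 1)) * legendreP (l + 1) y

lemma partS_succ (N : ℕ) (y : ℝ) : partS (N + 1) y = partS N y +
    (2 * ((N : ℝ) + 1) + 1) / (((N : ℝ) + 1) * (((N : ℝ) + 1) + 1)) * legendreP (N + 1) y := by
  rw [partS, Finset.sum_range_succ, ← partS]

lemma partS_neg_one (N : ℕ) : partS N (-1) = -1 + (-1) ^ N / ((N : ℝ) + 1) := by
  induction N with
  | zero => simp [partS]
  | succ N ih =>
    rw [partS_succ, ih, legendreP_neg, legendreP_one]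
    push_cast
    field_simp
    ring

lemma partS_hasDerivAt (N : ℕ) (y : ℝ) (h0 : -1 < y) (h1 : y < 1) :
    HasDerivAt (partS N) ((1 + y - legendreP N y - legendreP (N + 1) y) / (1 - y ^ 2)) y := by
  have hq : 1 - y ^ 2 ≠ 0 := by nlinarith
  induction N with
  | zero =>
    have : partS 0 = fun _ => 0 := by funext x; simp [partS]
    rw [this]; simpa [legendreP] using hasDerivAt_const y (0 : ℝ)
  | succ N ih =>
    have : partS (N + 1) = fun y => partS N y +
      (2 * ((N : ℝ) + 1) + 1) / (((N : ℝ) + 1) * (((N : ℝ) + 1) + 1)) * legendreP (N + 1) y := by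
      funext x; exact partS_succ N x
    rw [this]
    refine (ih.add ((legendreP_hasDerivAt (N + 1) y).const_mul _)).congr_deriv ?_
    have h := dLegendreP_I3 N y
    rw [eq_div_iff hq, add_mul, div_mul_cancel₀ _ hq]
    linear_combination h

/-- Terms of the rearranged, absolutely convergent series. -/
noncomputable def vTerm (l : ℕ) (y : ℝ) : ℝ :=
  2 / (((l : ℝ) + 1) * ((l : ℝ) + 3)) * (legendreP (l + 1) y - legendreP (l + 2) y)

lemma partS_byParts (N : ℕ) (y : ℝ) : (1 - y) * partS N y =
    ∑ l ∈ Finset.range N, vTerm l y - (1 - y) / 2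
      + (legendreP N y - legendreP (N + 1) y) / ((N : ℝ) + 2) := by
  induction N with
  | zero => simp [partS, legendreP]
  | succ N ih =>
    rw [partS_succ, mul_add, ih, Finset.sum_range_succ, vTerm]
    have h := legendreP_rec N y
    push_cast
    have h2 : (N : ℝ) + 2 ≠ 0 := by positivity
    rw [show legendreP (N + 1 + 1) y = legendreP (N + 2) y from rfl]
    have h3 : legendreP (N + 2) y = ((2 * (N : ℝ) + 3) * y * legendreP (N + 1) y - ((N : ℝ) + 1) * legendreP N y) / ((N : ℝ) + 2) := by
      rw [legendreP]
    rw [h3]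
    field_simp
    ring

lemma summable_aux (C : ℝ) : Summable (fun l : ℕ => C / ((l : ℝ) + 1) ^ 2) := by
  have h := (summable_nat_add_iff 1).2 (Real.summable_one_div_nat_pow.2 (by norm_num : 1 < 2))
  refine (h.mul_left C).congr fun l => ?_
  push_cast
  ring

lemma vTerm_bound (l : ℕ) (y : ℝ) (hy : y ∈ Set.Icc (-1 : ℝ) 1) :
    ‖vTerm l y‖ ≤ 4 / ((l : ℝ) + 1) ^ 2 := by
  have a := abs_le.1 (legendreP_abs_le (l + 1) y hy.1 hy.2)
  have b := abs_le.1 (legendreP_abs_le (l + 2) y hy.1 hy.2)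
  have h2 : |legendreP (l + 1) y - legendreP (l + 2) y| ≤ 2 := by
    rw [abs_le]; constructor <;> linarith
  rw [vTerm, Real.norm_eq_abs, abs_mul, abs_of_nonneg (by positivity)]
  calc _ ≤ 2 / (((l : ℝ) + 1) * ((l : ℝ) + 3)) * 2 := by gcongr
    _ = 4 / (((l : ℝ) + 1) * ((l : ℝ) + 3)) := by ring
    _ ≤ _ := by
      rw [pow_two]
      gcongr
      linarith

/-- Limit of `(1 - y) * partS N y`. -/
noncomputable def limV (y : ℝ) : ℝ := ∑' l, vTerm l y - (1 - y) / 2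

lemma limV_cont : ContinuousOn limV (Set.Icc (-1) 1) := by
  have h : ContinuousOn (fun y => ∑' l, vTerm l y) (Set.Icc (-1) 1) := by
    refine continuousOn_tsum (fun l => ?_) (summable_aux 4) vTerm_bound
    have h1 := legendreP_continuous (l + 1)
    have h2 := legendreP_continuous (l + 2)
    unfold vTerm
    fun_prop
  unfold limV
  exact h.sub (by fun_prop)

lemma tendsto_bdd_div (u : ℕ → ℝ) (C : ℝ) (hu : ∀ n, |u n| ≤ C / ((n : ℝ) + 1)) :
    Tendsto u atTop (𝓝 0) := by
  refine squeeze_zero_norm hu ?_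
  simpa [div_eq_mul_inv] using tendsto_one_div_add_atTop_nhds_zero_nat.const_mul C

lemma partS_tendsto (y : ℝ) (h0 : -1 ≤ y) (h1 : y < 1) :
    Tendsto (fun N => partS N y) atTop (𝓝 (limV y / (1 - y))) := by
  have hs : Summable (fun l => vTerm l y) :=
    Summable.of_norm_bounded (summable_aux 4) fun l => vTerm_bound l y ⟨h0, h1.le⟩
  have ht := hs.hasSum.tendsto_sum_nat
  have hz : Tendsto (fun N : ℕ => (legendreP N y - legendreP (N + 1) y) / ((N : ℝ) + 2)) atTop
      (𝓝 0) := by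
    refine tendsto_bdd_div _ 2 fun n => ?_
    have a := abs_le.1 (legendreP_abs_le n y h0 h1.le)
    have b := abs_le.1 (legendreP_abs_le (n + 1) y h0 h1.le)
    have h2 : |legendreP n y - legendreP (n + 1) y| ≤ 2 := by
      rw [abs_le]; constructor <;> linarith
    rw [abs_div, abs_of_nonneg (by positivity : (0 : ℝ) ≤ n + 2)]
    gcongr
    linarith
  have hne : 1 - y ≠ 0 := by linarith
  have := (((ht.sub_const ((1 - y) / 2)).add hz).div_const (1 - y))
  rw [add_zero] at this
  refine this.congr fun N => ?_
  rw [← partS_byParts]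
  field_simp

/-- The corrector: antiderivative of `P (N+1) + P (N+2)`. -/
noncomputable def corrR (N : ℕ) (y : ℝ) : ℝ :=
  (legendreP (N + 2) y - legendreP N y) / (2 * (N : ℝ) + 3) +
    (legendreP (N + 3) y - legendreP (N + 1) y) / (2 * (N : ℝ) + 5)

lemma corrR_hasDerivAt (N : ℕ) (y : ℝ) :
    HasDerivAt (corrR N) (legendreP (N + 1) y + legendreP (N + 2) y) y := by
  have h := (((legendreP_hasDerivAt (N + 2) y).sub (legendreP_hasDerivAt N y)).div_const
    (2 * (N : ℝ) + 3)).add (((legendreP_hasDerivAt (N + 3) y).sub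
      (legendreP_hasDerivAt (N + 1) y)).div_const (2 * (N : ℝ) + 5))
  refine h.congr_deriv ?_
  have a := dLegendreP_diff N y
  have b := dLegendreP_diff (N + 1) y
  push_cast at b
  rw [show N + 1 + 2 = N + 3 from rfl, show N + 1 + 1 = N + 2 from rfl] at b
  rw [a, b]
  have h3 : 2 * (N : ℝ) + 3 ≠ 0 := by positivity
  have h5 : 2 * (N : ℝ) + 5 ≠ 0 := by positivity
  field_simp
  ring

lemma corrR_bound (N : ℕ) (y : ℝ) (h0 : -1 ≤ y) (h1 : y ≤ 1) :
    |corrR N y| ≤ 4 / ((N : ℝ) + 1) := by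
  have key : ∀ m n : ℕ, |legendreP m y - legendreP n y| ≤ 2 := by
    intro m n
    have a := abs_le.1 (legendreP_abs_le m y h0 h1)
    have b := abs_le.1 (legendreP_abs_le n y h0 h1)
    rw [abs_le]; constructor <;> linarith
  rw [corrR]
  refine (abs_add_le _ _).trans ?_
  rw [abs_div, abs_div, abs_of_nonneg (by positivity : (0 : ℝ) ≤ 2 * N + 3),
    abs_of_nonneg (by positivity : (0 : ℝ) ≤ 2 * N + 5)]
  have hN : (0 : ℝ) ≤ N := by positivity
  calc _ ≤ 2 / ((N : ℝ) + 1) + 2 / ((N : ℝ) + 1) := by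
        apply add_le_add
        · exact div_le_div₀ (by norm_num) (key _ _) (by positivity) (by linarith)
        · exact div_le_div₀ (by norm_num) (key _ _) (by positivity) (by linarith)
    _ = _ := by ring

lemma limit_const (a b : ℝ) (ha : -1 < a) (hab : a ≤ b) (hb : b < 1) :
    limV b / (1 - b) + Real.log (1 - b) = limV a / (1 - a) + Real.log (1 - a) := by
  set H : ℕ → ℝ → ℝ := fun N x => partS (N + 1) x + corrR N x / (1 - x ^ 2) + Real.log (1 - x)
    with hH
  have hlim : ∀ x, -1 < x → x < 1 →
      Tendsto (fun N => H N x) atTop (𝓝 (limV x / (1 - x) + Real.log (1 - x))) := by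
    intro x h0 h1
    have t1 := (tendsto_add_atTop_iff_nat 1).2 (partS_tendsto x h0.le h1)
    have t2 := (tendsto_bdd_div _ 4 (fun n => corrR_bound n x h0.le h1.le)).div_const (1 - x ^ 2)
    simpa using (t1.add t2).add_const (Real.log (1 - x))
  set m : ℝ := (1 + a) * (1 - b) with hm
  have hmpos : 0 < m := mul_pos (by linarith) (by linarith)
  have hdiff : Tendsto (fun N => H N b - H N a) atTop (𝓝 0) := by
    refine tendsto_bdd_div _ (8 / m ^ 2 * (b - a)) fun N => ?_
    have hd : ∀ x ∈ Set.Icc a b, HasDerivWithinAt (H N)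
        (corrR N x * (2 * x) / (1 - x ^ 2) ^ 2) (Set.Icc a b) x := by
      intro x hx
      have h0 : -1 < x := by linarith [hx.1]
      have h1 : x < 1 := by linarith [hx.2]
      have hq0 : 1 - x ^ 2 ≠ 0 := by nlinarith
      have hq1 : 1 - x ≠ 0 := by linarith
      have hq : HasDerivAt (fun x : ℝ => 1 - x ^ 2) (-(2 * x)) x := by
        simpa using ((hasDerivAt_id x).pow 2).const_sub 1
      have hl : HasDerivAt (fun x : ℝ => Real.log (1 - x)) (-1 / (1 - x)) x := by
        have := ((hasDerivAt_id x).const_sub 1).log hq1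
        simpa using this
      refine (((partS_hasDerivAt (N + 1) x h0 h1).add
        ((corrR_hasDerivAt N x).div hq hq0)).add hl).hasDerivWithinAt.congr_deriv ?_
      have e : (1 : ℝ) / (1 - x) = (1 + x) / (1 - x ^ 2) := by
        rw [div_eq_div_iff hq1 hq0]; ring
      rw [neg_div, e, show N + 1 + 1 = N + 2 from rfl]
      field_simp
      ring
    have hbd : ∀ x ∈ Set.Icc a b, ‖corrR N x * (2 * x) / (1 - x ^ 2) ^ 2‖ ≤
        8 / m ^ 2 / ((N : ℝ) + 1) := by
      intro x hx
      have h0 : -1 < x := by linarith [hx.1]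
      have h1 : x < 1 := by linarith [hx.2]
      have hmx : m ≤ 1 - x ^ 2 := by
        have : m ≤ (1 + x) * (1 - x) :=
          mul_le_mul (by linarith [hx.1]) (by linarith [hx.2]) (by linarith) (by linarith)
        linarith
      have hc := corrR_bound N x h0.le h1.le
      have hx2 : |2 * x| ≤ 2 := by rw [abs_le]; constructor <;> linarith
      rw [Real.norm_eq_abs, abs_div, abs_mul,
        abs_of_nonneg (a := (1 - x ^ 2) ^ 2) (sq_nonneg (1 - x ^ 2))]
      calc _ ≤ (4 / ((N : ℝ) + 1) * 2) / m ^ 2 := by gcongr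
        _ = _ := by ring
    have := (convex_Icc a b).norm_image_sub_le_of_norm_hasDerivWithin_le hd hbd
      (Set.left_mem_Icc.2 hab) (Set.right_mem_Icc.2 hab)
    rw [Real.norm_eq_abs, Real.norm_eq_abs, abs_of_nonneg (by linarith : 0 ≤ b - a)] at this
    refine this.trans (le_of_eq ?_)
    ring
  have h2 := (hlim b (by linarith) hb).sub (hlim a ha (by linarith))
  have := tendsto_nhds_unique h2 hdiff
  linarith

lemma limV_neg_one : limV (-1) / (1 - (-1)) = -1 := by
  refine tendsto_nhds_unique (partS_tendsto (-1) le_rfl (by norm_num)) ?_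
  have : Tendsto (fun N : ℕ => (-1 : ℝ) ^ N / ((N : ℝ) + 1)) atTop (𝓝 0) := by
    refine tendsto_bdd_div _ 1 fun n => ?_
    rw [abs_div, abs_pow, abs_of_nonneg (by positivity : (0 : ℝ) ≤ n + 1)]
    simp
  have h := this.const_add (-1)
  rw [add_zero] at h
  exact h.congr fun N => (partS_neg_one N).symm

lemma limit_value (y : ℝ) (h0 : -1 ≤ y) (h1 : y < 1) :
    limV y / (1 - y) = -Real.log (Real.exp 1 / 2 * (1 - y)) := by
  have hlog : Real.log (Real.exp 1 / 2 * (1 - y)) = 1 - Real.log 2 + Real.log (1 - y) := by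
    rw [Real.log_mul (by positivity) (by linarith), Real.log_div (by positivity) (by norm_num),
      Real.log_exp]
  rw [hlog]
  suffices limV y / (1 - y) + Real.log (1 - y) =
      limV (-1) / (1 - (-1)) + Real.log (1 - (-1)) by
    rw [limV_neg_one] at this
    norm_num at this
    linarith
  rcases h0.eq_or_lt with h | h
  · rw [← h]
  have hc : ContinuousWithinAt (fun x => limV x / (1 - x) + Real.log (1 - x))
      (Set.Icc (-1) 1) (-1) := by
    have := limV_cont (-1) (by constructor <;> norm_num)
    refine (this.div (by fun_prop) (by norm_num)).add ?_
    apply ContinuousAt.continuousWithinAt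
    exact ContinuousAt.log (by fun_prop) (by norm_num)
  have hc2 : Tendsto (fun x => limV x / (1 - x) + Real.log (1 - x)) (𝓝[Set.Ioc (-1) y] (-1))
      (𝓝 (limV (-1) / (1 - (-1)) + Real.log (1 - (-1)))) :=
    hc.mono fun x hx => ⟨hx.1.le, hx.2.trans h1.le⟩
  have : (𝓝[Set.Ioc (-1) y] (-1 : ℝ)).NeBot := by
    rw [nhdsWithin_Ioc_eq_nhdsGT h]; infer_instance
  refine tendsto_nhds_unique (tendsto_const_nhds.congr' ?_) hc2
  filter_upwards [self_mem_nhdsWithin] with x hx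
  exact limit_const x y hx.1 hx.2 h1

/-- Exact split representation: for `w > 0` and `-1 ≤ y < 1`,
`∑_{l=0}^∞ (2l+1) P l y/(l(l+1)+w)
  = 1/w - ∑_{l=1}^∞ [(2l+1)/(l(l+1)) - (2l+1)/(l(l+1)+w)] P l y - log((e/2)(1-y))`,
where both series converge. -/
theorem split_representation (w : ℝ) (hw : 0 < w) (y : ℝ) (hy₁ : -1 ≤ y) (hy₂ : y < 1) :
    Summable (fun l : ℕ =>
      ((2 * ((l : ℝ) + 1) + 1) / (((l : ℝ) + 1) * (((l : ℝ) + 1) + 1)) -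
        (2 * ((l : ℝ) + 1) + 1) / (((l : ℝ) + 1) * (((l : ℝ) + 1) + 1) + w)) *
          legendreP (l + 1) y) ∧
    Tendsto (fun N : ℕ => ∑ l ∈ Finset.range N,
        (2 * (l : ℝ) + 1) * legendreP l y / ((l : ℝ) * ((l : ℝ) + 1) + w)) atTop
      (𝓝 (1 / w -
        (∑' l : ℕ,
          ((2 * ((l : ℝ) + 1) + 1) / (((l : ℝ) + 1) * (((l : ℝ) + 1) + 1)) -
            (2 * ((l : ℝ) + 1) + 1) / (((l : ℝ) + 1) * (((l : ℝ) + 1) + 1) + w)) *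
              legendreP (l + 1) y) -
        Real.log (Real.exp 1 / 2 * (1 - y)))) := by
  have hsum : Summable (fun l : ℕ =>
      ((2 * ((l : ℝ) + 1) + 1) / (((l : ℝ) + 1) * (((l : ℝ) + 1) + 1)) -
        (2 * ((l : ℝ) + 1) + 1) / (((l : ℝ) + 1) * (((l : ℝ) + 1) + 1) + w)) *
          legendreP (l + 1) y) := by
    refine Summable.of_norm_bounded (summable_aux (2 * w)) fun l => ?_
    have hP := legendreP_abs_le (l + 1) y hy₁ hy₂.le
    set k : ℝ := (l : ℝ) + 1 with hk
    have hk1 : 1 ≤ k := by simp [hk]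
    have hk0 : 0 < k := by linarith
    have e : (2 * k + 1) / (k * (k + 1)) - (2 * k + 1) / (k * (k + 1) + w) =
        (2 * k + 1) * w / (k * (k + 1) * (k * (k + 1) + w)) := by
      have : k * (k + 1) + w ≠ 0 := by positivity
      field_simp
      ring
    rw [e, Real.norm_eq_abs, abs_mul, abs_of_nonneg (by positivity)]
    calc _ ≤ (2 * k + 1) * w / (k * (k + 1) * (k * (k + 1) + w)) * 1 := by gcongr
      _ = (2 * k + 1) * w / (k * (k + 1) * (k * (k + 1) + w)) := mul_one _
      _ ≤ (2 * (k + 1)) * w / (k * (k + 1) * (k * k)) := by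
        gcongr
        · linarith
        · nlinarith
      _ = 2 * w / (k ^ 2 * k) := by field_simp
      _ ≤ 2 * w / k ^ 2 := by
        apply div_le_div_of_nonneg_left (by positivity) (by positivity)
        nlinarith [sq_nonneg k]
  refine ⟨hsum, ?_⟩
  rw [← tendsto_add_atTop_iff_nat 1]
  have t1 := partS_tendsto y hy₁ hy₂
  rw [limit_value y hy₁ hy₂] at t1
  have t := (t1.sub hsum.hasSum.tendsto_sum_nat).const_add (1 / w)
  have e : ∀ A B : ℝ, 1 / w - A - B = 1 / w + (-B - A) := fun A B => by ring
  rw [e]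
  refine t.congr fun N => ?_
  rw [Finset.sum_range_succ', partS, ← Finset.sum_sub_distrib, add_comm]
  congr 1
  · refine Finset.sum_congr rfl fun l _ => ?_
    push_cast
    ring
  · simp [legendreP]
end

section
/- Let w > 1/4, β = √(w - 1/4), S₁ = -1/2 + iβ, S₂ = -1/2 - iβ, and let y be a real number with -1 ≤ y < 1. Then for every z > 0, e^{zS₁} + e^{zS₂} = 2·e^{-z/2}·cos(βz), and the interchange identity ∑_{l=0}^∞ (∫_0^∞ e^{-zl}·2e^{-z/2}cos(βz) dz)·P_l(y) = ∫_0^∞ 2e^{-z/2}cos(βz)·(∑_{l=0}^∞ e^{-zl}·P_l(y)) dz holds, with ∑_{l=0}^∞ e^{-zl}·P_l(y) = 1/√(e^{-2z} - 2e^{-z}y + 1) for every z > 0. -/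
open Filter Topology

lemma hasSum_of_eq {f g : ℕ → ℝ} {a : ℝ} (h : HasSum f a) (e : ∀ n, f n = g n) : HasSum g a := by
  rwa [← funext e]

/-- The discrete energy is bounded by its initial value. -/
lemma legendreP_energy (y : ℝ) (n : ℕ) :
    legendreP (n + 1) y ^ 2 + legendreP n y ^ 2 - 2 * y * legendreP (n + 1) y * legendreP n y
      ≤ 1 - y ^ 2 := by
  induction n with
  | zero => simp only [legendreP]; nlinarith
  | succ n ih =>
    have hr := legendreP_rec n y
    set a := legendreP n y
    set b := legendreP (n + 1) y
    set c := legendreP (n + 1 + 1) y with hc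
    change ((n : ℝ) + 2) * c = _ at hr
    have hn : (0 : ℝ) ≤ n := Nat.cast_nonneg n
    have h1 : ((n : ℝ) + 2) * (c - y * b) = (n + 1) * (y * b - a) := by linarith
    have h2 : (c - y * b) ^ 2 ≤ (y * b - a) ^ 2 := by
      have h3 : ((n : ℝ) + 2) ^ 2 * (c - y * b) ^ 2 = (n + 1) ^ 2 * (y * b - a) ^ 2 := by
        rw [← mul_pow, h1, mul_pow]
      have h4 : ((n : ℝ) + 1) ^ 2 * (y * b - a) ^ 2 ≤ (n + 2) ^ 2 * (y * b - a) ^ 2 := by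
        gcongr
        norm_num
      have h5 : (0 : ℝ) < ((n : ℝ) + 2) ^ 2 := by positivity
      exact le_of_mul_le_mul_left (h3.trans_le h4) h5
    nlinarith

lemma legendreP_neg_one (n : ℕ) :
    legendreP n (-1) = (-1) ^ n ∧ legendreP (n + 1) (-1) = (-1) ^ (n + 1) := by
  induction n with
  | zero => simp [legendreP]
  | succ n ih =>
    refine ⟨ih.2, ?_⟩
    have hr := legendreP_rec n (-1)
    rw [ih.1, ih.2] at hr
    have h : ((n : ℝ) + 2) ≠ 0 := by positivity
    apply mul_left_cancel₀ h
    rw [hr]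
    ring

lemma abs_legendreP_le (y : ℝ) (hy₁ : -1 ≤ y) (hy₂ : y < 1) (n : ℕ) :
    |legendreP n y| ≤ 1 := by
  rcases hy₁.eq_or_lt with h | h
  · rw [← h, (legendreP_neg_one n).1]; simp
  · have he := legendreP_energy y n
    have hp : 0 < 1 - y ^ 2 := by nlinarith
    rw [← sq_le_one_iff_abs_le_one]
    have h2 : (1 - y ^ 2) * legendreP n y ^ 2 ≤ (1 - y ^ 2) * 1 := by
      nlinarith [sq_nonneg (legendreP (n + 1) y - y * legendreP n y)]
    exact le_of_mul_le_mul_left h2 hp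

/-- Christoffel-Darboux at `1`. -/
lemma legendreP_weighted_sum (y : ℝ) (n : ℕ) :
    (1 - y) * ∑ l ∈ Finset.range (n + 1), (2 * (l : ℝ) + 1) * legendreP l y
      = (n + 1) * (legendreP n y - legendreP (n + 1) y) := by
  induction n with
  | zero => simp [legendreP]
  | succ n ih =>
    rw [Finset.sum_range_succ, mul_add, ih]
    have hr := legendreP_rec n y
    push_cast
    change _ = _ * (_ - legendreP (n + 2) y)
    linear_combination hr

lemma abs_weighted_sum_le (y : ℝ) (hy₁ : -1 ≤ y) (hy₂ : y < 1) (n : ℕ) :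
    |∑ l ∈ Finset.range n, (2 * (l : ℝ) + 1) * legendreP l y| ≤ 2 / (1 - y) * n := by
  cases n with
  | zero => simp
  | succ n =>
    have h := legendreP_weighted_sum y n
    have hp : 0 < 1 - y := by linarith
    have h1 := abs_legendreP_le y hy₁ hy₂ n
    have h2 := abs_legendreP_le y hy₁ hy₂ (n + 1)
    rw [div_mul_eq_mul_div, le_div_iff₀ hp]
    calc _ = |(1 - y) * ∑ l ∈ Finset.range (n + 1), (2 * (l : ℝ) + 1) * legendreP l y| := by
            rw [abs_mul, abs_of_pos hp, mul_comm]
      _ = ((n : ℝ) + 1) * |legendreP n y - legendreP (n + 1) y| := by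
            rw [h, abs_mul, abs_of_nonneg (by positivity : (0 : ℝ) ≤ (n : ℝ) + 1)]
      _ ≤ ((n : ℝ) + 1) * 2 := by
            gcongr
            exact (abs_sub _ _).trans (by linarith)
      _ = 2 * ((n + 1 : ℕ) : ℝ) := by push_cast; ring

lemma abel_bound (a t : ℕ → ℝ) (K : ℝ) (ha0 : ∀ n, 0 ≤ a n) (ha : ∀ n, a (n + 1) ≤ a n)
    (hT : ∀ n, |∑ l ∈ Finset.range n, t l| ≤ K * n) (N : ℕ) :
    |∑ l ∈ Finset.range N, a l * t l| ≤ K * ∑ l ∈ Finset.range N, a l := by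
  have key : ∀ N : ℕ, |∑ l ∈ Finset.range N, a l * t l - a N * ∑ l ∈ Finset.range N, t l|
      ≤ K * (∑ l ∈ Finset.range N, a l - N * a N) := by
    intro N
    induction N with
    | zero => simp
    | succ N ih =>
      have hTN := hT (N + 1)
      have hd : 0 ≤ a N - a (N + 1) := by linarith [ha N]
      have e : ∑ l ∈ Finset.range (N + 1), a l * t l - a (N + 1) * ∑ l ∈ Finset.range (N + 1), t l
          = (∑ l ∈ Finset.range N, a l * t l - a N * ∑ l ∈ Finset.range N, t l)
            + (a N - a (N + 1)) * ∑ l ∈ Finset.range (N + 1), t l := by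
        rw [Finset.sum_range_succ, Finset.sum_range_succ]; ring
      rw [e]
      refine (abs_add_le _ _).trans ?_
      rw [abs_mul, abs_of_nonneg hd]
      have := mul_le_mul_of_nonneg_left hTN hd
      rw [Finset.sum_range_succ a]
      push_cast at this ⊢
      nlinarith
  have h1 := key N
  have h2 := mul_le_mul_of_nonneg_left (hT N) (ha0 N)
  have h3 := abs_add_le (∑ l ∈ Finset.range N, a l * t l - a N * ∑ l ∈ Finset.range N, t l)
    (a N * ∑ l ∈ Finset.range N, t l)
  rw [sub_add_cancel, abs_mul (a N), abs_of_nonneg (ha0 N)] at h3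
  nlinarith

lemma summable_deriv_aux (P : ℕ → ℝ) (hP : ∀ n, |P n| ≤ 1) (u : ℝ) (hu : |u| < 1) :
    Summable (fun n : ℕ => ((n : ℝ) + 1) * P (n + 1) * u ^ n) := by
  have h1 : Summable (fun n : ℕ => ((n : ℝ) + 1) * |u| ^ n) := by
    have ha := summable_pow_mul_geometric_of_norm_lt_one 1 (r := |u|) (by simpa using hu)
    have hb := summable_geometric_of_lt_one (abs_nonneg u) hu
    refine (ha.add hb).congr fun n => ?_
    ring
  refine Summable.of_norm_bounded h1 fun n => ?_
  rw [Real.norm_eq_abs, abs_mul, abs_mul, abs_pow,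
    abs_of_nonneg (by positivity : (0 : ℝ) ≤ (n : ℝ) + 1)]
  have := hP (n + 1)
  have h0 : 0 ≤ |u| ^ n := by positivity
  have h2 : ((n : ℝ) + 1) * |P (n + 1)| ≤ (n + 1) * 1 := by gcongr
  nlinarith

lemma summable_aux_s17 (P : ℕ → ℝ) (hP : ∀ n, |P n| ≤ 1) (u : ℝ) (hu : |u| < 1) :
    Summable (fun n : ℕ => P n * u ^ n) := by
  refine Summable.of_norm_bounded (summable_geometric_of_lt_one (abs_nonneg u) hu) fun n => ?_
  rw [Real.norm_eq_abs, abs_mul, abs_pow]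
  exact mul_le_of_le_one_left (by positivity) (hP n)

lemma hasDerivAt_aux (P : ℕ → ℝ) (hP : ∀ n, |P n| ≤ 1) (u : ℝ) (hu : |u| < 1) :
    HasDerivAt (fun v : ℝ => ∑' n : ℕ, P n * v ^ n)
      (∑' n : ℕ, ((n : ℝ) + 1) * P (n + 1) * u ^ n) u := by
  obtain ⟨r, hr1, hr2⟩ := exists_between hu
  have hr0 : 0 ≤ r := (abs_nonneg u).trans hr1.le
  have hsum : Summable (fun n : ℕ => (n : ℝ) * r ^ (n - 1)) := by
    rw [← summable_nat_add_iff 1]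
    have := summable_deriv_aux (fun _ => 1) (by simp) r (by rwa [abs_of_nonneg hr0])
    simpa using this
  have key := hasDerivAt_tsum_of_isPreconnected (𝕜 := ℝ) (F := ℝ)
    (g := fun n v => P n * v ^ n) (g' := fun n v => P n * ((n : ℝ) * v ^ (n - 1)))
    (u := fun n : ℕ => (n : ℝ) * r ^ (n - 1)) (t := Set.Ioo (-r) r) (y₀ := u) (y := u)
    hsum isOpen_Ioo isPreconnected_Ioo
    (fun n v _ => (hasDerivAt_pow n v).const_mul (P n))
    (fun n v hv => by
      rw [Real.norm_eq_abs, abs_mul, abs_mul, abs_pow, Nat.abs_cast]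
      have hv' : |v| ≤ r := (abs_lt.mpr ⟨hv.1, hv.2⟩).le
      have : (n : ℝ) * |v| ^ (n - 1) ≤ n * r ^ (n - 1) := by gcongr
      exact (mul_le_of_le_one_left (by positivity) (hP n)).trans this)
    (abs_lt.mp hr1) (summable_aux_s17 P hP u hu) (abs_lt.mp hr1)
  have hs : Summable (fun n : ℕ => P n * ((n : ℝ) * u ^ (n - 1))) := by
    rw [← summable_nat_add_iff 1]
    refine (summable_deriv_aux P hP u hu).congr fun n => ?_
    rw [Nat.add_sub_cancel]
    push_cast
    ring
  suffices he : ∑' n : ℕ, ((n : ℝ) + 1) * P (n + 1) * u ^ n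
      = ∑' n : ℕ, P n * ((n : ℝ) * u ^ (n - 1)) by
    rw [he]; exact key
  rw [hs.tsum_eq_zero_add]
  simp only [Nat.cast_zero, zero_mul, mul_zero, zero_add, Nat.add_sub_cancel]
  refine tsum_congr fun n => ?_
  push_cast
  ring

lemma ode_aux (y : ℝ) (hP : ∀ n, |legendreP n y| ≤ 1) (u : ℝ) (hu : |u| < 1) :
    (1 - 2 * y * u + u ^ 2) * (∑' n : ℕ, ((n : ℝ) + 1) * legendreP (n + 1) y * u ^ n)
      = (y - u) * ∑' n : ℕ, legendreP n y * u ^ n := by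
  have hA := summable_deriv_aux (fun n => legendreP n y) hP u hu
  have hG := summable_aux_s17 (fun n => legendreP n y) hP u hu
  have hA' := hA.hasSum
  have hG' := hG.hasSum
  set A := ∑' n : ℕ, ((n : ℝ) + 1) * legendreP (n + 1) y * u ^ n
  set G := ∑' n : ℕ, legendreP n y * u ^ n
  have hA1 : HasSum (fun n : ℕ => ((n : ℝ) + 2) * legendreP (n + 2) y * u ^ (n + 1)) (A - y) := by
    have := (hasSum_nat_add_iff' 1).mpr hA'
    have h1 : legendreP 1 y = y := by simp only [legendreP]
    simp only [Finset.range_one, Finset.sum_singleton, pow_zero, Nat.cast_zero,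
      zero_add, one_mul, mul_one, h1] at this
    refine hasSum_of_eq this fun n => ?_
    push_cast; ring_nf
  have hG1 : HasSum (fun n : ℕ => legendreP (n + 1) y * u ^ (n + 1)) (G - 1) := by
    have := (hasSum_nat_add_iff' 1).mpr hG'
    simpa [legendreP] using this
  have hN : HasSum (fun n : ℕ => (n : ℝ) * legendreP n y * u ^ n) (u * A) := by
    rw [← hasSum_nat_add_iff' 1]
    simp only [Finset.range_one, Finset.sum_singleton, Nat.cast_zero, zero_mul, sub_zero]
    refine hasSum_of_eq (hA'.mul_left u) fun n => ?_
    push_cast; ring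
  have h := (hA1.sub (((hA'.mul_left (2 * u * y))).add (hG1.mul_left y))).add
    ((hN.mul_left u).add (hG'.mul_left u))
  have hz : HasSum (fun _ : ℕ => (0 : ℝ)) 0 := hasSum_zero
  have := (hasSum_of_eq (g := fun _ => (0 : ℝ)) h fun n => ?_).unique hz
  · linear_combination this
  · have hr := legendreP_rec n y
    linear_combination (u ^ (n + 1)) * hr

lemma quad_pos (y u : ℝ) (hy₁ : -1 ≤ y) (hy₂ : y < 1) (hu : |u| < 1) :
    0 < 1 - 2 * y * u + u ^ 2 := by
  have := abs_lt.mp hu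
  rcases le_total 0 u with h | h <;> nlinarith

lemma gen_fun (y : ℝ) (hy₁ : -1 ≤ y) (hy₂ : y < 1) (u : ℝ) (hu : |u| < 1) :
    ∑' n : ℕ, legendreP n y * u ^ n = 1 / Real.sqrt (1 - 2 * y * u + u ^ 2) := by
  have hP := abs_legendreP_le y hy₁ hy₂
  set F : ℝ → ℝ := fun v => (∑' n : ℕ, legendreP n y * v ^ n) * Real.sqrt (1 - 2 * y * v + v ^ 2)
    with hF
  have hd : ∀ v ∈ Set.Ioo (-1 : ℝ) 1, HasDerivAt F 0 v := by
    intro v hv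
    have hv' : |v| < 1 := abs_lt.mpr ⟨hv.1, hv.2⟩
    have hq := quad_pos y v hy₁ hy₂ hv'
    have h1 := hasDerivAt_aux (fun n => legendreP n y) hP v hv'
    have h2 : HasDerivAt (fun v : ℝ => 1 - 2 * y * v + v ^ 2) (-(2 * y) + 2 * v) v := by
      have ha := ((hasDerivAt_id v).const_mul (2 * y)).const_sub 1
      have hb := hasDerivAt_pow 2 v
      have hc := ha.add hb
      refine hc.congr_deriv ?_
      simp
    have h3 := h1.mul (h2.sqrt hq.ne')
    refine h3.congr_deriv ?_
    have ho := ode_aux y hP v hv'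
    have hs : 0 < Real.sqrt (1 - 2 * y * v + v ^ 2) := Real.sqrt_pos.mpr hq
    have hss := Real.sq_sqrt hq.le
    field_simp
    rw [hss]
    linear_combination ho
  have hu' : u ∈ Set.Ioo (-1 : ℝ) 1 := abs_lt.mp hu
  have h0' : (0 : ℝ) ∈ Set.Ioo (-1 : ℝ) 1 := by simp
  have hc : F u = F 0 :=
    isOpen_Ioo.is_const_of_deriv_eq_zero isPreconnected_Ioo
      (fun v hv => (hd v hv).differentiableAt.differentiableWithinAt)
      (fun v hv => (hd v hv).deriv) hu' h0'
  have hF0 : F 0 = 1 := by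
    simp only [hF]
    rw [tsum_eq_single 0 (fun n hn => by simp [hn])]
    simp [legendreP]
  rw [hF0] at hc
  exact eq_one_div_of_mul_eq_one_left hc

lemma gen_hasSum (y : ℝ) (hy₁ : -1 ≤ y) (hy₂ : y < 1) (z : ℝ) (hz : 0 < z) :
    HasSum (fun l : ℕ => Real.exp (-(z * (l : ℝ))) * legendreP l y)
        (1 / Real.sqrt (Real.exp (-2 * z) - 2 * Real.exp (-z) * y + 1)) := by
  have hu : |Real.exp (-z)| < 1 := by
    rw [abs_of_pos (Real.exp_pos _)]; exact Real.exp_lt_one_iff.mpr (by linarith)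
  have h := (summable_aux_s17 (fun n => legendreP n y) (abs_legendreP_le y hy₁ hy₂) _ hu).hasSum
  rw [gen_fun y hy₁ hy₂ _ hu] at h
  have e : Real.exp (-2 * z) - 2 * Real.exp (-z) * y + 1
      = 1 - 2 * y * Real.exp (-z) + Real.exp (-z) ^ 2 := by
    rw [← Real.exp_nat_mul]
    push_cast
    ring_nf
  rw [e]
  refine hasSum_of_eq h fun n => ?_
  rw [← Real.exp_nat_mul, mul_comm]
  ring_nf

lemma exp_term_bound (z : ℝ) (hz : 0 < z) (l : ℕ) :
    Real.exp (-z / 2) * (Real.exp (-(z * (l : ℝ))) / (2 * l + 1))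
      ≤ 2 * (z ^ (-(1 / 2) : ℝ) * Real.exp (-(1 / 4) * z ^ (1 : ℝ)))
        * (1 / ((l : ℝ) + 1) ^ (3 / 2 : ℝ)) := by
  have hl : (0 : ℝ) < (l : ℝ) + 1 := by positivity
  set x := z * (l + 1) / 4 with hx
  have hx0 : 0 < x := by positivity
  have h1 : Real.exp (-x) ≤ 1 / Real.sqrt x := by
    rw [Real.exp_neg, ← one_div]
    apply one_div_le_one_div_of_le (Real.sqrt_pos.mpr hx0)
    have h2 : Real.sqrt x ≤ x + 1 := by
      nlinarith [Real.sq_sqrt hx0.le, sq_nonneg (Real.sqrt x - 1)]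
    exact h2.trans (Real.add_one_le_exp x)
  have h4 : Real.sqrt 4 = 2 := by
    rw [show (4 : ℝ) = 2 ^ 2 by norm_num]; exact Real.sqrt_sq (by norm_num)
  have h2 : 1 / Real.sqrt x = 2 * z ^ (-(1 / 2) : ℝ) / Real.sqrt (l + 1) := by
    rw [Real.rpow_neg hz.le, ← Real.sqrt_eq_rpow, hx, Real.sqrt_div (by positivity),
      Real.sqrt_mul hz.le, h4]
    have := Real.sqrt_pos.mpr hz
    have := Real.sqrt_pos.mpr hl
    field_simp
  have h3 : ((l : ℝ) + 1) ^ (3 / 2 : ℝ) = (l + 1) * Real.sqrt (l + 1) := by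
    rw [show (3 / 2 : ℝ) = 1 + 1 / 2 by norm_num, Real.rpow_add hl, Real.rpow_one,
      Real.sqrt_eq_rpow]
  have h5 : Real.exp (-z / 2) * Real.exp (-(z * (l : ℝ)))
      ≤ Real.exp (-(1 / 4) * z) * Real.exp (-x) := by
    rw [← Real.exp_add, ← Real.exp_add]
    apply Real.exp_le_exp.mpr
    rw [hx]
    have : 0 ≤ z * l := by positivity
    nlinarith
  have hs := Real.sqrt_pos.mpr hl
  rw [Real.rpow_one, h3]
  calc _ = (Real.exp (-z / 2) * Real.exp (-(z * (l : ℝ)))) / (2 * l + 1) := by ring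
    _ ≤ (Real.exp (-(1 / 4) * z) * Real.exp (-x)) / (2 * l + 1) := by gcongr
    _ ≤ (Real.exp (-(1 / 4) * z) * (1 / Real.sqrt x)) / (l + 1) := by
        gcongr
        have : (0 : ℝ) ≤ l := Nat.cast_nonneg l
        linarith
    _ = _ := by
        rw [h2]
        field_simp

lemma partial_bound (y : ℝ) (hy₁ : -1 ≤ y) (hy₂ : y < 1) (z : ℝ) (hz : 0 < z) (N : ℕ) :
    Real.exp (-z / 2) * |∑ l ∈ Finset.range N, Real.exp (-(z * (l : ℝ))) * legendreP l y|
      ≤ 2 / (1 - y) * (2 * (∑' l : ℕ, 1 / ((l : ℝ) + 1) ^ (3 / 2 : ℝ)))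
        * (z ^ (-(1 / 2) : ℝ) * Real.exp (-(1 / 4) * z ^ (1 : ℝ))) := by
  have hsum : Summable (fun l : ℕ => 1 / ((l : ℝ) + 1) ^ (3 / 2 : ℝ)) := by
    have := (summable_nat_add_iff 1).mpr
      (Real.summable_one_div_nat_rpow.mpr (by norm_num : (1 : ℝ) < 3 / 2))
    simpa using this
  have hab := abel_bound (fun l : ℕ => Real.exp (-(z * (l : ℝ))) / (2 * l + 1))
    (fun l : ℕ => (2 * (l : ℝ) + 1) * legendreP l y) (2 / (1 - y)) (fun n => by positivity)
    (fun n => by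
      push_cast
      gcongr
      · nlinarith
      · linarith) (abs_weighted_sum_le y hy₁ hy₂) N
  have e : ∑ l ∈ Finset.range N, Real.exp (-(z * (l : ℝ))) * legendreP l y
      = ∑ l ∈ Finset.range N, Real.exp (-(z * (l : ℝ))) / (2 * l + 1)
          * ((2 * (l : ℝ) + 1) * legendreP l y) := by
    refine Finset.sum_congr rfl fun l _ => ?_
    have : (2 * (l : ℝ) + 1) ≠ 0 := by positivity
    field_simp
  rw [e]
  have hK : 0 ≤ 2 / (1 - y) := by
    apply div_nonneg <;> linarith
  set B := z ^ (-(1 / 2) : ℝ) * Real.exp (-(1 / 4) * z ^ (1 : ℝ)) with hB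
  have hB0 : 0 ≤ B := by positivity
  calc _ ≤ Real.exp (-z / 2) * (2 / (1 - y) *
          ∑ l ∈ Finset.range N, Real.exp (-(z * (l : ℝ))) / (2 * l + 1)) := by gcongr
    _ = 2 / (1 - y) * ∑ l ∈ Finset.range N,
          Real.exp (-z / 2) * (Real.exp (-(z * (l : ℝ))) / (2 * l + 1)) := by
        rw [← Finset.mul_sum]; ring
    _ ≤ 2 / (1 - y) * ∑ l ∈ Finset.range N, 2 * B * (1 / ((l : ℝ) + 1) ^ (3 / 2 : ℝ)) := by
        exact mul_le_mul_of_nonneg_left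
          (Finset.sum_le_sum fun l _ => exp_term_bound z hz l) hK
    _ = 2 / (1 - y) * (2 * B * ∑ l ∈ Finset.range N, (1 / ((l : ℝ) + 1) ^ (3 / 2 : ℝ))) := by
        rw [← Finset.mul_sum]
    _ ≤ 2 / (1 - y) * (2 * B * ∑' l : ℕ, 1 / ((l : ℝ) + 1) ^ (3 / 2 : ℝ)) := by
        gcongr
        exact hsum.sum_le_tsum _ (fun l _ => by positivity)
    _ = _ := by ring

lemma integrable_term (β : ℝ) (l : ℕ) :
    MeasureTheory.IntegrableOn (fun z : ℝ =>
      Real.exp (-(z * (l : ℝ))) * (2 * Real.exp (-z / 2) * Real.cos (β * z))) (Set.Ioi 0) := by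
  have h := (exp_neg_integrableOn_Ioi 0 (b := 1 / 2) (by norm_num)).const_mul 2
  refine MeasureTheory.Integrable.mono' h (by fun_prop) ?_
  filter_upwards [MeasureTheory.ae_restrict_mem measurableSet_Ioi] with z hz
  have hz : 0 < z := hz
  rw [Real.norm_eq_abs, abs_mul, abs_mul, abs_mul, Real.abs_exp, Real.abs_exp, abs_two]
  have h1 : Real.exp (-(z * (l : ℝ))) ≤ 1 := by
    apply Real.exp_le_one_iff.mpr
    have : 0 ≤ z * l := by positivity
    linarith
  have h2 := Real.abs_cos_le_one (β * z)
  have e : -z / 2 = -(1 / 2) * z := by ring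
  rw [e]
  have h3 : 2 * Real.exp (-(1 / 2) * z) * |Real.cos (β * z)| ≤ 2 * Real.exp (-(1 / 2) * z) :=
    mul_le_of_le_one_right (by positivity) h2
  exact (mul_le_of_le_one_left (by positivity) h1).trans h3


/-- For `w > 1/4`, `β = √(w-1/4)`, `S₁ = -1/2 + iβ`, `S₂ = -1/2 - iβ` and `-1 ≤ y < 1`:
`e^{zS₁} + e^{zS₂} = 2 e^{-z/2} cos(βz)` for `z > 0`; the generating-function sum
`∑ e^{-zl} P l y = 1/√(e^{-2z} - 2e^{-z}y + 1)` holds for `z > 0`; and the interchange of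
summation and integration
`∑_l (∫_0^∞ e^{-zl} 2e^{-z/2} cos(βz) dz) P l y = ∫_0^∞ 2e^{-z/2} cos(βz) (∑_l e^{-zl} P l y) dz`
holds. -/
theorem interchange_sum_integral (w : ℝ) (hw : 1 / 4 < w)
    (β : ℝ) (hβ : β = Real.sqrt (w - 1 / 4))
    (S₁ S₂ : ℂ) (hS₁ : S₁ = -1 / 2 + Complex.I * β) (hS₂ : S₂ = -1 / 2 - Complex.I * β)
    (y : ℝ) (hy₁ : -1 ≤ y) (hy₂ : y < 1) :
    (∀ z : ℝ, 0 < z →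
      Complex.exp ((z : ℂ) * S₁) + Complex.exp ((z : ℂ) * S₂) =
        ((2 * Real.exp (-z / 2) * Real.cos (β * z) : ℝ) : ℂ)) ∧
    (∀ z : ℝ, 0 < z →
      HasSum (fun l : ℕ => Real.exp (-(z * (l : ℝ))) * legendreP l y)
        (1 / Real.sqrt (Real.exp (-2 * z) - 2 * Real.exp (-z) * y + 1))) ∧
    Tendsto (fun N : ℕ => ∑ l ∈ Finset.range N,
        (∫ z in Set.Ioi (0 : ℝ),
          Real.exp (-(z * (l : ℝ))) * (2 * Real.exp (-z / 2) * Real.cos (β * z))) *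
          legendreP l y) atTop
      (𝓝 (∫ z in Set.Ioi (0 : ℝ), 2 * Real.exp (-z / 2) * Real.cos (β * z) *
          ∑' l : ℕ, Real.exp (-(z * (l : ℝ))) * legendreP l y)) := by
  refine ⟨?_, fun z hz => gen_hasSum y hy₁ hy₂ z hz, ?_⟩
  · intro z _
    have e1 : (z : ℂ) * S₁ = ((-z / 2 : ℝ) : ℂ) + ((β * z : ℝ) : ℂ) * Complex.I := by
      rw [hS₁]; push_cast; ring
    have e2 : (z : ℂ) * S₂ = ((-z / 2 : ℝ) : ℂ) + (-((β * z : ℝ) : ℂ)) * Complex.I := by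
      rw [hS₂]; push_cast; ring
    rw [e1, e2, Complex.exp_add, Complex.exp_add, Complex.exp_mul_I, Complex.exp_mul_I,
      Complex.cos_neg, Complex.sin_neg]
    push_cast
    ring
  · have e : ∀ N : ℕ, ∑ l ∈ Finset.range N,
        (∫ z in Set.Ioi (0 : ℝ),
          Real.exp (-(z * (l : ℝ))) * (2 * Real.exp (-z / 2) * Real.cos (β * z))) *
          legendreP l y
        = ∫ z in Set.Ioi (0 : ℝ), 2 * Real.exp (-z / 2) * Real.cos (β * z) *
          ∑ l ∈ Finset.range N, Real.exp (-(z * (l : ℝ))) * legendreP l y := by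
      intro N
      simp_rw [← MeasureTheory.integral_mul_const]
      rw [← MeasureTheory.integral_finsetSum _
        (fun l _ => (integrable_term β l).mul_const (legendreP l y))]
      congr 1
      ext z
      rw [Finset.mul_sum]
      refine Finset.sum_congr rfl fun l _ => ?_
      ring
    simp_rw [e]
    have hint := (integrableOn_rpow_mul_exp_neg_mul_rpow (p := 1) (s := -(1 / 2)) (b := 1 / 4)
      (by norm_num) (by norm_num) (by norm_num)).const_mul
        (2 * (2 / (1 - y) * (2 * (∑' l : ℕ, 1 / ((l : ℝ) + 1) ^ (3 / 2 : ℝ)))))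
    refine MeasureTheory.tendsto_integral_of_dominated_convergence _ (fun N => by fun_prop) hint
      (fun N => ?_) ?_
    · filter_upwards [MeasureTheory.ae_restrict_mem measurableSet_Ioi] with z hz
      have hb := partial_bound y hy₁ hy₂ z hz N
      rw [Real.norm_eq_abs, abs_mul, abs_mul, abs_mul, Real.abs_exp, abs_two]
      have h2 := Real.abs_cos_le_one (β * z)
      set S := |∑ l ∈ Finset.range N, Real.exp (-(z * (l : ℝ))) * legendreP l y|
      have hS : 0 ≤ S := abs_nonneg _
      have h3 : 2 * Real.exp (-z / 2) * |Real.cos (β * z)| * S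
          ≤ 2 * Real.exp (-z / 2) * 1 * S := by gcongr
      linarith
    · filter_upwards [MeasureTheory.ae_restrict_mem measurableSet_Ioi] with z hz
      exact ((gen_hasSum y hy₁ hy₂ z hz).summable.hasSum.tendsto_sum_nat).const_mul _
end
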